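/- arXiv:math/0611913 — 3 statements merged into one kernel-verified Lean document; each statement's English description precedes it below -/
import Mathlib

section
/- Let H ∈ (1/2,1), t > 0, n ∈ ℕ and 3 ≤ k ≤ n. Then for every u ∈ (t_{k−3}, t_{k−2}], (f_k^t(u))² ≥ 3^{2H−3}·t^{2H−1}·n^{1−2H}·u^{2H−1}. -/
/-!
Write `h = t / n` for the mesh. For `u ∈ (t_{k-3}, t_{k-2}]` and `v ∈ [t_{k-1}, t_k]` one has
`0 < u ≤ v` and `h ≤ v - u ≤ 3 h`. As `H - 1/2 > 0` and `H - 3/2 < 0`, the integrand at `v` is at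
least the constant `u^(H-1/2) (3h)^(H-3/2)`, so `f_k^t(u) ≥ h u^(H-1/2) (3h)^(H-3/2) ≥ 0`.
Squaring gives exactly `3^(2H-3) h^(2H-1) u^(2H-1)`.
-/

open Real MeasureTheory intervalIntegral

noncomputable section

/-- The kernel `f_k^t(s) = ∫_{t_{k-1}}^{t_k} u^(H-1/2) (u-s)^(H-3/2) du`,
where `t_k = t·k/n`. -/
def fkt (H t : ℝ) (n k : ℕ) (s : ℝ) : ℝ :=
  ∫ u in (t * ((k : ℝ) - 1) / n)..(t * k / n), u ^ (H - 1 / 2) * (u - s) ^ (H - 3 / 2)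

/-- Lower bound for `f_k^t`: for `u ∈ (t_{k-3}, t_{k-2}]`,
`(f_k^t(u))² ≥ 3^(2H-3) t^(2H-1) n^(1-2H) u^(2H-1)`. -/
theorem fkt_sq_lower_bound (H t : ℝ) (hH : H ∈ Set.Ioo (1 / 2 : ℝ) 1) (ht : 0 < t)
    (n k : ℕ) (hk : 3 ≤ k) (hkn : k ≤ n)
    (u : ℝ) (hu : t * ((k : ℝ) - 3) / n < u) (hu' : u ≤ t * ((k : ℝ) - 2) / n) :
    (fkt H t n k u) ^ 2 ≥ (3 : ℝ) ^ (2 * H - 3) * t ^ (2 * H - 1) * (n : ℝ) ^ (1 - 2 * H) * u ^ (2 * H - 1) := by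
  obtain ⟨hH1, hH2⟩ := hH
  have hk3 : (3 : ℝ) ≤ k := by exact_mod_cast hk
  have hn : (0 : ℝ) < n := by
    have : 0 < n := by omega
    exact_mod_cast this
  obtain ⟨h, hh⟩ : ∃ h, h = t / n := ⟨_, rfl⟩
  have hpos : 0 < h := hh ▸ div_pos ht hn
  have mesh : ∀ x : ℝ, t * x / n = h * x := fun x => by rw [hh]; ring
  rw [mesh] at hu hu'
  have hu0 : 0 < u := lt_of_le_of_lt (mul_nonneg hpos.le (by linarith)) hu
  have hlen : h * ((k : ℝ) - 1) ≤ h * k := by nlinarith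
  have hgap : ∀ v ∈ Set.Icc (h * ((k : ℝ) - 1)) (h * k), h ≤ v - u ∧ v - u ≤ 3 * h := by
    intro v hv
    constructor <;> nlinarith [hv.1, hv.2]
  have hbound : h * (u ^ (H - 1 / 2) * (3 * h) ^ (H - 3 / 2)) ≤ fkt H t n k u := by
    unfold fkt
    rw [mesh, mesh]
    have hconst : h * (u ^ (H - 1 / 2) * (3 * h) ^ (H - 3 / 2))
        = ∫ _ in (h * ((k : ℝ) - 1))..(h * k), u ^ (H - 1 / 2) * (3 * h) ^ (H - 3 / 2) := by
      rw [intervalIntegral.integral_const, smul_eq_mul]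
      ring
    rw [hconst]
    refine intervalIntegral.integral_mono_on hlen intervalIntegrable_const ?_ ?_
    · apply ContinuousOn.intervalIntegrable
      rw [Set.uIcc_of_le hlen]
      refine ContinuousOn.mul (continuousOn_id.rpow_const fun v _ => Or.inr (by linarith))
        ((continuousOn_id.sub continuousOn_const).rpow_const fun v hv => Or.inl ?_)
      exact (lt_of_lt_of_le hpos (hgap v hv).1).ne'
    · intro v hv
      obtain ⟨h1, h2⟩ := hgap v hv
      exact mul_le_mul
        (Real.rpow_le_rpow hu0.le (by linarith) (by linarith))
        (Real.rpow_le_rpow_of_nonpos (by linarith) h2 (by linarith))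
        (by positivity) (Real.rpow_nonneg (by linarith) _)
  have hsq : (h * (u ^ (H - 1 / 2) * (3 * h) ^ (H - 3 / 2))) ^ 2
      = (3 : ℝ) ^ (2 * H - 3) * t ^ (2 * H - 1) * (n : ℝ) ^ (1 - 2 * H) * u ^ (2 * H - 1) := by
    have sq_rpow : ∀ x a : ℝ, 0 < x → (x ^ a) ^ 2 = x ^ (2 * a) := fun x a hx => by
      rw [← Real.rpow_mul_natCast hx.le, mul_comm]
      norm_num
    have hth : t ^ (2 * H - 1) * (n : ℝ) ^ (1 - 2 * H) = h ^ 2 * h ^ (2 * H - 3) := by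
      rw [← Real.rpow_natCast h 2, ← Real.rpow_add hpos, hh,
        show ((2 : ℕ) : ℝ) + (2 * H - 3) = 2 * H - 1 by push_cast; ring,
        Real.div_rpow ht.le hn.le, show 1 - 2 * H = -(2 * H - 1) by ring,
        Real.rpow_neg hn.le, div_eq_mul_inv]
    rw [mul_assoc (_ ^ _) (t ^ _), hth, mul_pow, mul_pow, sq_rpow _ _ hu0,
      sq_rpow _ _ (by positivity), Real.mul_rpow (by norm_num) hpos.le,
      show 2 * (H - 1 / 2) = 2 * H - 1 by ring, show 2 * (H - 3 / 2) = 2 * H - 3 by ring]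
    ring
  rw [ge_iff_le, ← hsq]
  exact pow_le_pow_left₀ (by positivity) hbound 2
end
end

section
/- Let H ∈ (1/2,1), t > 0, n ∈ ℕ and 1 ≤ k ≤ n. Then for every z ∈ [t_{k−1}, t_k), g_k^t(z) ≤ (H − 1/2)^{−1}·t_k^{H−1/2}·(t_k − z)^{H−1/2}, and consequently g_k^t(z) ≤ (H − 1/2)^{−1}·t^{2H−1}·n^{1/2−H}. -/
/-!
On `[z, t_k]` the factor `u ^ (H - 1/2)` is at most `t_k ^ (H - 1/2)`, since the exponent is
positive and `z ≥ 0`. Pulling it out leaves `∫_z^{t_k} (u - z) ^ (H - 3/2) du`, which converges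
because `H - 3/2 > -1` and equals `(t_k - z) ^ (H - 1/2) / (H - 1/2)`. The second bound follows
from `t_k ≤ t` and `t_k - z ≤ t / n`.
-/

open Real MeasureTheory intervalIntegral

noncomputable section

/-- The kernel `g_k^t(s) = ∫_s^{t_k} u^(H-1/2) (u-s)^(H-3/2) du`, where `t_k = t·k/n`. -/
def gkt (H t : ℝ) (n k : ℕ) (s : ℝ) : ℝ :=
  ∫ u in s..(t * k / n), u ^ (H - 1 / 2) * (u - s) ^ (H - 3 / 2)

/-- Bound for `g_k^t`: for `z ∈ [t_{k-1}, t_k)`,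
`g_k^t(z) ≤ (H-1/2)⁻¹ t_k^(H-1/2) (t_k - z)^(H-1/2)`, and consequently
`g_k^t(z) ≤ (H-1/2)⁻¹ t^(2H-1) n^(1/2-H)`. -/
theorem gkt_upper_bound (H t : ℝ) (hH : H ∈ Set.Ioo (1 / 2 : ℝ) 1) (ht : 0 < t)
    (n k : ℕ) (hk : 1 ≤ k) (hkn : k ≤ n)
    (z : ℝ) (hz : t * ((k : ℝ) - 1) / n ≤ z) (hz' : z < t * k / n) :
    gkt H t n k z ≤ (H - 1 / 2)⁻¹ * (t * k / n) ^ (H - 1 / 2) * (t * k / n - z) ^ (H - 1 / 2) ∧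
      gkt H t n k z ≤ (H - 1 / 2)⁻¹ * t ^ (2 * H - 1) * (n : ℝ) ^ (1 / 2 - H) := by
  obtain ⟨hH1, -⟩ := hH
  have hk1 : (1 : ℝ) ≤ k := by exact_mod_cast hk
  have hkn' : (k : ℝ) ≤ n := by exact_mod_cast hkn
  have hn : (0 : ℝ) < n := by linarith
  have ha : 0 < H - 1 / 2 := by linarith
  have hz0 : 0 ≤ z :=
    le_trans (div_nonneg (mul_nonneg ht.le (by linarith)) hn.le) hz
  have hTt : t * k / n ≤ t := by
    rw [div_le_iff₀ hn]
    exact mul_le_mul_of_nonneg_left hkn' ht.le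
  have hTz : t * k / n - z ≤ t / n := by
    have h : t * ((k : ℝ) - 1) / n = t * k / n - t / n := by ring
    linarith
  have hT0 : 0 ≤ t * k / n := by positivity
  have key : gkt H t n k z ≤
      (H - 1 / 2)⁻¹ * (t * k / n) ^ (H - 1 / 2) * (t * k / n - z) ^ (H - 1 / 2) := by
    unfold gkt
    generalize t * (k : ℝ) / n = T at *
    have hint : IntervalIntegrable (fun u : ℝ => (u - z) ^ (H - 3 / 2)) volume z T := by
      have h := (intervalIntegrable_rpow' (a := 0) (b := T - z)
        (show -1 < H - 3 / 2 by linarith)).comp_sub_right z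
      simpa using h
    have hcont : Continuous fun u : ℝ => u ^ (H - 1 / 2) :=
      Real.continuous_rpow_const ha.le
    calc ∫ u in z..T, u ^ (H - 1 / 2) * (u - z) ^ (H - 3 / 2)
        ≤ ∫ u in z..T, T ^ (H - 1 / 2) * (u - z) ^ (H - 3 / 2) := by
          refine integral_mono_on hz'.le (hint.continuousOn_mul hcont.continuousOn)
            (hint.const_mul _) fun u hu => ?_
          exact mul_le_mul_of_nonneg_right
            (Real.rpow_le_rpow (hz0.trans hu.1) hu.2 ha.le)
            (Real.rpow_nonneg (sub_nonneg.2 hu.1) _)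
      _ = (H - 1 / 2)⁻¹ * T ^ (H - 1 / 2) * (T - z) ^ (H - 1 / 2) := by
          rw [intervalIntegral.integral_const_mul,
            intervalIntegral.integral_comp_sub_right (fun u : ℝ => u ^ (H - 3 / 2)) z,
            integral_rpow (Or.inl (by linarith)), sub_self,
            show H - 3 / 2 + 1 = H - 1 / 2 by ring, Real.zero_rpow ha.ne']
          ring
  refine ⟨key, key.trans ?_⟩
  have hsplit : t ^ (2 * H - 1) * (n : ℝ) ^ (1 / 2 - H) =
      t ^ (H - 1 / 2) * (t / n) ^ (H - 1 / 2) := by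
    rw [Real.div_rpow ht.le hn.le, show 2 * H - 1 = (H - 1 / 2) + (H - 1 / 2) by ring,
      Real.rpow_add ht, show 1 / 2 - H = -(H - 1 / 2) by ring, Real.rpow_neg hn.le]
    ring
  rw [mul_assoc, mul_assoc, hsplit]
  have hTz0 : 0 ≤ t * k / n - z := by linarith
  gcongr
end
end

section
/- Let H ∈ (0,1/2), t > 0, n ∈ ℕ and 2 ≤ k ≤ n. Then for every z with 0 < z ≤ t_{k−2}, p_k^t(z) ≤ min( (t_{k−1} − z)^{H−3/2}·(t/n) , (1/2 − H)^{−1}·(t/n)^{H−1/2} ). -/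
/-!
On `[t_{k-1}, t_k]` the factor `(z/u)^(1/2-H)` is at most `1` and `(u-z)^(H-3/2)` is decreasing in
`u`, so the integrand is at most `(t_{k-1}-z)^(H-3/2)`; integrating over an interval of length `t/n`
gives the first bound. The second follows from the first: `z ≤ t_{k-2}` means `t_{k-1}-z ≥ t/n`, so
the first bound is at most `(t/n)^(H-1/2)`, and `(1/2-H)⁻¹ ≥ 1`.
-/

open Real MeasureTheory intervalIntegral

noncomputable section

/-- The kernel `p_k^t(z) = ∫_{t_{k-1}}^{t_k} (z/u)^(1/2-H) (u-z)^(H-3/2) du`,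
where `t_k = t·k/n`. -/
def pkt (H t : ℝ) (n k : ℕ) (z : ℝ) : ℝ :=
  ∫ u in (t * ((k : ℝ) - 1) / n)..(t * k / n), (z / u) ^ (1 / 2 - H) * (u - z) ^ (H - 3 / 2)

/-- Upper bound for `p_k^t`: for `0 < z ≤ t_{k-2}` and `H ∈ (0, 1/2)`,
`p_k^t(z) ≤ min((t_{k-1} - z)^(H-3/2)·(t/n), (1/2 - H)⁻¹·(t/n)^(H-1/2))`. -/
theorem pkt_upper_bound (H t : ℝ) (hH : H ∈ Set.Ioo (0 : ℝ) (1 / 2)) (ht : 0 < t)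
    (n k : ℕ) (hk : 2 ≤ k) (hkn : k ≤ n)
    (z : ℝ) (hz : 0 < z) (hz' : z ≤ t * ((k : ℝ) - 2) / n) :
    pkt H t n k z ≤
      min ((t * ((k : ℝ) - 1) / n - z) ^ (H - 3 / 2) * (t / n))
        ((1 / 2 - H)⁻¹ * (t / n) ^ (H - 1 / 2)) := by
  obtain ⟨hH0, hH1⟩ := hH
  have hn : (0 : ℝ) < n := by exact_mod_cast (by omega : 0 < n)
  have hh : 0 < t / n := div_pos ht hn
  unfold pkt
  have ea : t * ((k : ℝ) - 1) / n = t * ((k : ℝ) - 2) / n + t / n := by ring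
  have eb : t * (k : ℝ) / n = t * ((k : ℝ) - 1) / n + t / n := by ring
  rw [eb]
  have hza : t / n ≤ t * ((k : ℝ) - 1) / n - z := by linarith
  generalize t * ((k : ℝ) - 1) / n = a at *
  generalize t / (n : ℝ) = h at *
  have haz : 0 < a - z := hh.trans_le hza
  have first : ∫ u in a..(a + h), (z / u) ^ (1 / 2 - H) * (u - z) ^ (H - 3 / 2)
      ≤ (a - z) ^ (H - 3 / 2) * h := by
    refine (le_abs_self _).trans ?_
    have key := intervalIntegral.norm_integral_le_of_norm_le_const (a := a) (b := a + h)
      (f := fun u => (z / u) ^ (1 / 2 - H) * (u - z) ^ (H - 3 / 2))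
      (C := (a - z) ^ (H - 3 / 2)) ?_
    · rwa [add_sub_cancel_left, abs_of_pos hh, Real.norm_eq_abs] at key
    · intro u hu
      rw [Set.uIoc_of_le (by linarith)] at hu
      have hu0 : 0 < u := by linarith [hu.1]
      have huz : 0 < u - z := by linarith [hu.1]
      have h1 : (z / u) ^ (1 / 2 - H) ≤ 1 :=
        Real.rpow_le_one (by positivity) ((div_le_one hu0).2 (by linarith)) (by linarith)
      have h2 : (u - z) ^ (H - 3 / 2) ≤ (a - z) ^ (H - 3 / 2) :=
        Real.rpow_le_rpow_of_nonpos haz (by linarith [hu.1]) (by linarith)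
      rw [Real.norm_of_nonneg (by positivity)]
      calc _ ≤ 1 * (u - z) ^ (H - 3 / 2) := by gcongr
        _ ≤ _ := by rwa [one_mul]
  refine le_min first (first.trans ?_)
  calc (a - z) ^ (H - 3 / 2) * h ≤ h ^ (H - 3 / 2) * h := by
        gcongr ?_ * h
        exact Real.rpow_le_rpow_of_nonpos hh hza (by linarith)
    _ = h ^ (H - 1 / 2) := by
        rw [← Real.rpow_add_one hh.ne']
        congr 1
        ring
    _ ≤ (1 / 2 - H)⁻¹ * h ^ (H - 1 / 2) :=
        le_mul_of_one_le_left (by positivity)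
          ((one_le_inv₀ (by linarith)).2 (by linarith))
end
end
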